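/- arXiv:2108.09321 — 3 statements merged into one kernel-verified Lean document; each statement's English description precedes it below -/
import Mathlib

section
/- Let f be monostable: f ∈ C²([0,1]), f(0) = f(1) = 0, and f''(u) < 0 for all u ∈ [0,1]. Then there exists a number c* < 0 such that for every speed c ≤ c* there exists a monotone increasing traveling profile, i.e. a C² function U : ℝ → [0,1] solving U''(x) + c·U'(x) + f(U(x)) = 0 for all x ∈ ℝ, with U(x) → 0 as x → −∞ and U(x) → 1 as x → +∞. -/
open Set Filter

/-!
Rescaling space by `k = -c / 2` turns the equation into `U'' - 2 U' + g(U) = 0` with `g = f / k²`,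
and the conditions `f u ≤ L u` and `c ≤ -2 √L` give `g u ≤ u`. This makes the triangle
`0 ≤ v ≤ u ≤ 1` of the phase plane `(u, v) = (U, U')` forward invariant when time is reversed. The
orbit issued from `(1 - ε, 0)` then descends to `u = 1/2`, because `2 u - v` decreases at the rate
`g u`, but by Grönwall's inequality the descent takes a time that tends to infinity as `ε → 0`.
Restarting these orbits at `u = 1/2` and extracting a limit by compactness produces an orbit that
stays in the triangle for all times. Along it `u` is monotone, and once more the loss of `2 u - v`
excludes limits other than `0` and `1`. For concave `f` one takes `L = f'(0)`.
-/

open scoped NNReal Topology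

namespace TravelingProfile

section IntegralCurve

variable {E : Type*} [NormedAddCommGroup E] [NormedSpace ℝ E] {F : E → E} {K M : ℝ≥0}
  {γ δ : ℝ → E} {x₀ : E}

theorem exists_isIntegralCurveOn_Ioo_of_bounded [CompleteSpace E] (hF : LipschitzWith K F)
    (hM : ∀ x, ‖F x‖ ≤ M) (x₀ : E) {T : ℝ} (hT : 0 < T) :
    ∃ γ : ℝ → E, γ 0 = x₀ ∧ IsIntegralCurveOn γ (fun _ => F) (Ioo (-T) T) := by
  have hPL : IsPicardLindelof (fun _ => F) (tmin := -T) (tmax := T)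
      ⟨0, by constructor <;> linarith⟩ x₀ (M * T.toNNReal) 0 M K :=
    .of_time_independent (fun x _ => hM x) hF.lipschitzOnWith (by simp [hT.le])
  obtain ⟨γ, hγ₀, hγ⟩ := hPL.exists_eq_forall_mem_Icc_hasDerivWithinAt₀
  exact ⟨γ, hγ₀, fun t ht => (hγ t (Ioo_subset_Icc_self ht)).mono Ioo_subset_Icc_self⟩

theorem eqOn_Ioo_of_isIntegralCurveOn (hF : LipschitzWith K F) {S T : ℝ} (hS : 0 < S)
    (hST : S ≤ T) (hγ : IsIntegralCurveOn γ (fun _ => F) (Ioo (-S) S))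
    (hδ : IsIntegralCurveOn δ (fun _ => F) (Ioo (-T) T)) (h₀ : γ 0 = δ 0) :
    EqOn γ δ (Ioo (-S) S) := by
  have hsub : Ioo (-S) S ⊆ Ioo (-T) T := Ioo_subset_Ioo (neg_le_neg hST) hST
  refine ODE_solution_unique_of_mem_Ioo (v := fun _ => F) (s := fun _ => univ)
    (fun _ _ => hF.lipschitzOnWith) ⟨neg_lt_zero.2 hS, hS⟩ (fun t ht => ⟨?_, trivial⟩)
    (fun t ht => ⟨?_, trivial⟩) h₀
  · exact (hγ t ht).hasDerivAt (isOpen_Ioo.mem_nhds ht)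
  · exact (hδ t (hsub ht)).hasDerivAt (isOpen_Ioo.mem_nhds (hsub ht))

theorem exists_isIntegralCurve_of_forall_Ioo (hF : LipschitzWith K F)
    (h : ∀ T > 0, ∃ γ : ℝ → E, γ 0 = x₀ ∧ IsIntegralCurveOn γ (fun _ => F) (Ioo (-T) T)) :
    ∃ γ : ℝ → E, γ 0 = x₀ ∧ IsIntegralCurve γ (fun _ => F) := by
  choose! β hβ₀ hβ using h
  have glued_eq {T t : ℝ} (ht : |t| + 1 ≤ T) : β (|t| + 1) t = β T t :=
    have hpos : 0 < |t| + 1 := by positivity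
    eqOn_Ioo_of_isIntegralCurveOn hF hpos ht (hβ _ hpos) (hβ _ (hpos.trans_le ht))
      (by rw [hβ₀ _ hpos, hβ₀ _ (hpos.trans_le ht)]) (abs_lt.1 (lt_add_one |t|))
  refine ⟨fun t => β (|t| + 1) t, hβ₀ _ (by positivity), fun t => ?_⟩
  have ht : t ∈ Ioo (-(|t| + 2)) (|t| + 2) := abs_lt.1 (by linarith)
  have hderiv : HasDerivAt (β (|t| + 2)) (F (β (|t| + 2) t)) t :=
    (hβ _ (by positivity) t ht).hasDerivAt (isOpen_Ioo.mem_nhds ht)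
  have hnear : ∀ᶠ r in 𝓝 t, |r| < |t| + 1 :=
    continuous_abs.continuousAt.eventually_lt_const (lt_add_one |t|)
  simp only [glued_eq (show |t| + 1 ≤ |t| + 2 by linarith)]
  exact hderiv.congr_of_eventuallyEq (hnear.mono fun r hr => glued_eq (by linarith))

theorem exists_isIntegralCurve_of_bounded [CompleteSpace E] (hF : LipschitzWith K F)
    (hM : ∀ x, ‖F x‖ ≤ M) (x₀ : E) :
    ∃ γ : ℝ → E, γ 0 = x₀ ∧ IsIntegralCurve γ (fun _ => F) :=
  exists_isIntegralCurve_of_forall_Ioo hF fun _ =>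
    exists_isIntegralCurveOn_Ioo_of_bounded hF hM x₀

theorem dist_le_mul_exp_of_le (hF : LipschitzWith K F) (hγ : IsIntegralCurve γ (fun _ => F))
    (hδ : IsIntegralCurve δ (fun _ => F)) {s t : ℝ} (hst : s ≤ t) :
    dist (γ t) (δ t) ≤ dist (γ s) (δ s) * Real.exp (K * (t - s)) :=
  dist_le_of_trajectories_ODE (v := fun _ => F) (fun _ => hF)
    hγ.continuous.continuousOn (fun r _ => (hγ r).hasDerivWithinAt)
    hδ.continuous.continuousOn (fun r _ => (hδ r).hasDerivWithinAt) le_rfl t ⟨hst, le_rfl⟩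

theorem isIntegralCurve_comp_neg (hγ : IsIntegralCurve γ (fun _ => F)) :
    IsIntegralCurve (fun t => γ (-t)) (fun _ x => -F x) := by
  simpa [Function.comp_def] using! hγ.comp_mul (-1)

theorem dist_le_mul_exp_abs (hF : LipschitzWith K F) (hγ : IsIntegralCurve γ (fun _ => F))
    (hδ : IsIntegralCurve δ (fun _ => F)) (s t : ℝ) :
    dist (γ t) (δ t) ≤ dist (γ s) (δ s) * Real.exp (K * |t - s|) := by
  rcases le_total s t with hst | hts
  · rw [abs_of_nonneg (sub_nonneg.2 hst)]
    exact dist_le_mul_exp_of_le hF hγ hδ hst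
  · rw [abs_of_nonpos (sub_nonpos.2 hts)]
    have hrev := dist_le_mul_exp_of_le hF.neg (isIntegralCurve_comp_neg hγ)
      (isIntegralCurve_comp_neg hδ) (neg_le_neg hts)
    simpa only [neg_neg, sub_neg_eq_add, neg_sub, neg_add_eq_sub] using hrev

theorem tendsto_of_tendsto_isIntegralCurve {ι : Type*} {l : Filter ι} {β : ι → ℝ → E}
    (hF : LipschitzWith K F) (hβ : ∀ i, IsIntegralCurve (β i) (fun _ => F))
    (hγ : IsIntegralCurve γ (fun _ => F)) {s : ℝ} (h : Tendsto (fun i => β i s) l (𝓝 (γ s)))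
    (t : ℝ) : Tendsto (fun i => β i t) l (𝓝 (γ t)) := by
  rw [tendsto_iff_dist_tendsto_zero] at h ⊢
  refine squeeze_zero (fun _ => dist_nonneg)
    (fun i => dist_le_mul_exp_abs hF (hβ i) hγ s t) ?_
  simpa only [zero_mul] using h.mul_const (Real.exp (K * |t - s|))

theorem eq_of_isIntegralCurve_of_apply_eq_zero (hF : LipschitzWith K F)
    (hγ : IsIntegralCurve γ (fun _ => F)) {s : ℝ} (hzero : F (γ s) = 0) (t : ℝ) :
    γ t = γ s :=
  congrFun (ODE_solution_unique_univ (v := fun _ => F) (s := fun _ => univ) (t₀ := s)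
    (g := fun _ => γ s) (fun _ => hF.lipschitzOnWith) (fun r => ⟨hγ r, trivial⟩)
    (fun r => ⟨isIntegralCurve_const (v := fun _ => F) (fun _ => hzero) r, trivial⟩) rfl) t

theorem le_escape_time (hF : LipschitzWith K F) (hK : 0 < K)
    (hγ : IsIntegralCurve γ (fun _ => F)) {x : E} (hx : F x = 0) {r T τ : ℝ} (hr : 0 < r)
    (hτ : 0 ≤ τ) (h₀ : dist (γ 0) x ≤ r * Real.exp (-(K * T))) (hr_le : r ≤ dist (γ τ) x) :
    T ≤ τ := by
  have hgrowth : dist (γ τ) x ≤ dist (γ 0) x * Real.exp (K * (τ - 0)) :=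
    dist_le_mul_exp_of_le hF hγ (isIntegralCurve_const fun _ => hx) hτ
  have hr_exp : r * 1 ≤ r * Real.exp (K * (τ - T)) :=
    calc r * 1 ≤ dist (γ τ) x := by rwa [mul_one]
      _ ≤ dist (γ 0) x * Real.exp (K * (τ - 0)) := hgrowth
      _ ≤ r * Real.exp (-(K * T)) * Real.exp (K * (τ - 0)) := by gcongr
      _ = r * Real.exp (K * (τ - T)) := by rw [mul_assoc, ← Real.exp_add]; ring_nf
  have hnonneg : 0 ≤ K * (τ - T) := Real.one_le_exp_iff.1 (le_of_mul_le_mul_left hr_exp hr)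
  exact sub_nonneg.1 (nonneg_of_mul_nonneg_right hnonneg (NNReal.coe_pos.2 hK))

theorem exists_isIntegralCurve_forall_mem [CompleteSpace E] (hF : LipschitzWith K F)
    (hM : ∀ x, ‖F x‖ ≤ M) {A S : Set E} (hA : IsCompact A) (hS : IsClosed S)
    (h : ∀ n : ℕ, ∃ γ : ℝ → E, IsIntegralCurve γ (fun _ => F) ∧ γ 0 ∈ A ∧
      ∀ t, -(n : ℝ) ≤ t → γ t ∈ S) :
    ∃ γ : ℝ → E, IsIntegralCurve γ (fun _ => F) ∧ γ 0 ∈ A ∧ ∀ t, γ t ∈ S := by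
  choose β hβ hβA hβS using h
  obtain ⟨x₀, hx₀, φ, hφ, hlim⟩ := hA.tendsto_subseq hβA
  obtain ⟨γ, rfl, hγ⟩ := exists_isIntegralCurve_of_bounded hF hM x₀
  refine ⟨γ, hγ, hx₀, fun t => ?_⟩
  have hlim_t : Tendsto (fun n => β (φ n) t) atTop (𝓝 (γ t)) :=
    tendsto_of_tendsto_isIntegralCurve hF (fun n => hβ (φ n)) hγ hlim t
  obtain ⟨N, hN⟩ := exists_nat_ge (-t)
  refine hS.mem_of_tendsto hlim_t ?_
  filter_upwards [eventually_ge_atTop N] with n hn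
  have hNφ : (N : ℝ) ≤ φ n := by exact_mod_cast hn.trans (hφ.id_le n)
  exact hβS _ t (by linarith)

end IntegralCurve

theorem nonneg_of_deriv_nonneg_of_neg {g g' : ℝ → ℝ} (hg : ∀ t, HasDerivAt g (g' t) t)
    (hg' : ∀ t, g t < 0 → 0 ≤ g' t) {a b : ℝ} (hab : a ≤ b) (ha : 0 ≤ g a) : 0 ≤ g b := by
  by_contra! hb
  have hcont : Continuous g := continuous_iff_continuousAt.2 fun t => (hg t).continuousAt
  obtain ⟨m, ⟨⟨ham, hmb⟩, hm⟩, hlast⟩ :=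
    (isCompact_Icc.inter_right (isClosed_Ici.preimage hcont)).exists_isGreatest
      (⟨a, ⟨le_rfl, hab⟩, ha⟩ : (Icc a b ∩ g ⁻¹' Ici 0).Nonempty)
  have hneg {t : ℝ} (ht : t ∈ Ioo m b) : g t < 0 := by
    by_contra! h
    exact ht.1.not_ge (hlast ⟨⟨ham.trans ht.1.le, ht.2.le⟩, h⟩)
  have hmono : MonotoneOn g (Icc m b) := by
    refine monotoneOn_of_hasDerivWithinAt_nonneg (convex_Icc m b) hcont.continuousOn
      (fun t _ => (hg t).hasDerivWithinAt) fun t ht => hg' t (hneg ?_)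
    rwa [interior_Icc] at ht
  exact hb.not_ge (hm.trans (hmono ⟨le_rfl, hmb⟩ ⟨hmb, le_rfl⟩ hmb))

/-- The Lipschitz nonlinearities in `U'' - 2 U' + f(U) = 0`, the normal form reached by rescaling
space. The bound `f u ≤ u` says that the speed `-2` is admissible. -/
structure IsNormalizedMonostable (K : ℝ≥0) (f : ℝ → ℝ) : Prop where
  lipschitz : LipschitzOnWith K f (Icc 0 1)
  map_zero : f 0 = 0
  map_one : f 1 = 0
  pos : ∀ u ∈ Ioo (0 : ℝ) 1, 0 < f u
  le_self : ∀ u ∈ Ioo (0 : ℝ) 1, f u ≤ u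

/-- The nearest-point retraction of `ℝ` onto `[0, 1]`. -/
noncomputable def unitClamp (x : ℝ) : ℝ := projIcc 0 1 zero_le_one x

theorem unitClamp_mem (x : ℝ) : unitClamp x ∈ Icc (0 : ℝ) 1 := (projIcc 0 1 zero_le_one x).2

theorem unitClamp_of_mem {x : ℝ} (hx : x ∈ Icc (0 : ℝ) 1) : unitClamp x = x :=
  congrArg Subtype.val (projIcc_of_mem zero_le_one hx)

theorem unitClamp_of_nonpos {x : ℝ} (hx : x ≤ 0) : unitClamp x = 0 :=
  congrArg Subtype.val (projIcc_of_le_left zero_le_one hx)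

theorem monotone_unitClamp : Monotone unitClamp := fun _ _ h => monotone_projIcc zero_le_one h

theorem lipschitzWith_unitClamp : LipschitzWith 1 unitClamp := LipschitzWith.projIcc zero_le_one

/-- The phase-plane field of `U'' - 2 U' + f(U) = 0` in the coordinates `(U, U')`, with time
reversed and precomposed with the retraction onto the unit square, which makes it bounded and
globally Lipschitz. -/
noncomputable def reversedField (f : ℝ → ℝ) (p : ℝ × ℝ) : ℝ × ℝ :=
  (-unitClamp p.2, f (unitClamp p.1) - 2 * unitClamp p.2)

/-- The region `0 ≤ v ≤ u ≤ 1` of the phase plane, forward invariant under `reversedField`. -/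
def trappingTriangle : Set (ℝ × ℝ) := {p | 0 ≤ p.2 ∧ p.2 ≤ p.1 ∧ p.1 ≤ 1}

theorem isClosed_trappingTriangle : IsClosed trappingTriangle :=
  (isClosed_le continuous_const continuous_snd).inter
    ((isClosed_le continuous_snd continuous_fst).inter
      (isClosed_le continuous_fst continuous_const))

theorem fst_mem_of_mem_trappingTriangle {p : ℝ × ℝ} (hp : p ∈ trappingTriangle) :
    p.1 ∈ Icc (0 : ℝ) 1 :=
  ⟨hp.1.trans hp.2.1, hp.2.2⟩

theorem snd_mem_of_mem_trappingTriangle {p : ℝ × ℝ} (hp : p ∈ trappingTriangle) :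
    p.2 ∈ Icc (0 : ℝ) 1 :=
  ⟨hp.1, hp.2.1.trans hp.2.2⟩

theorem isCompact_trappingTriangle : IsCompact trappingTriangle :=
  (isCompact_Icc.prod isCompact_Icc).of_isClosed_subset isClosed_trappingTriangle fun _ hp =>
    ⟨fst_mem_of_mem_trappingTriangle hp, snd_mem_of_mem_trappingTriangle hp⟩

theorem reversedField_of_mem_trappingTriangle {p : ℝ × ℝ} (hp : p ∈ trappingTriangle)
    (f : ℝ → ℝ) : reversedField f p = (-p.2, f p.1 - 2 * p.2) := by
  rw [reversedField, unitClamp_of_mem (fst_mem_of_mem_trappingTriangle hp),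
    unitClamp_of_mem (snd_mem_of_mem_trappingTriangle hp)]

theorem lipschitzWith_reversedField {f : ℝ → ℝ} {K : ℝ≥0} (hf : LipschitzOnWith K f (Icc 0 1)) :
    LipschitzWith (K + 2) (reversedField f) := by
  have hfst : LipschitzWith K fun p : ℝ × ℝ => f (unitClamp p.1) := by
    have hf' : LipschitzWith K (f ∘ unitClamp) := by
      simpa only [mul_one, lipschitzOnWith_univ] using
        hf.comp lipschitzWith_unitClamp.lipschitzOnWith fun x (_ : x ∈ univ) => unitClamp_mem x
    simpa only [mul_one, Function.comp_def] using hf'.comp LipschitzWith.prod_fst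
  have hsnd : LipschitzWith 1 fun p : ℝ × ℝ => unitClamp p.2 := by
    simpa only [mul_one, Function.comp_def] using
      lipschitzWith_unitClamp.comp LipschitzWith.prod_snd
  have htwo : LipschitzWith 2 fun p : ℝ × ℝ => 2 * unitClamp p.2 := by
    simpa [Function.comp_def] using (lipschitzWith_smul (2 : ℝ)).comp hsnd
  refine (hsnd.neg.prodMk (hfst.sub htwo)).weaken (max_le ?_ le_rfl)
  exact one_le_two.trans (le_add_of_nonneg_left K.2)

namespace IsNormalizedMonostable

variable {f : ℝ → ℝ} {K : ℝ≥0}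

theorem apply_mem_Icc (hf : IsNormalizedMonostable K f) {u : ℝ} (hu : u ∈ Icc (0 : ℝ) 1) :
    f u ∈ Icc 0 u := by
  rcases eq_endpoints_or_mem_Ioo_of_mem_Icc hu with rfl | rfl | hu
  · simp [hf.map_zero]
  · simp [hf.map_one]
  · exact ⟨(hf.pos u hu).le, hf.le_self u hu⟩

theorem norm_reversedField_le (hf : IsNormalizedMonostable K f) (p : ℝ × ℝ) :
    ‖reversedField f p‖ ≤ (2 : ℝ≥0) := by
  have hu₁ : unitClamp p.1 ≤ 1 := (unitClamp_mem p.1).2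
  obtain ⟨hv₀, hv₁⟩ := unitClamp_mem p.2
  obtain ⟨hf₀, hfu⟩ := hf.apply_mem_Icc (unitClamp_mem p.1)
  refine max_le ?_ ?_ <;> simp only [reversedField, Real.norm_eq_abs, abs_le, NNReal.coe_ofNat] <;>
    constructor <;> linarith

end IsNormalizedMonostable

theorem reversedField_one_zero {f : ℝ → ℝ} (hf₁ : f 1 = 0) : reversedField f (1, 0) = 0 := by
  simp [reversedField, unitClamp_of_nonpos le_rfl, unitClamp_of_mem (right_mem_Icc.2 zero_le_one),
    hf₁]

/-- `γ` is a complete orbit of the time-reversed phase-plane field of `f`. -/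
abbrev IsReversedOrbit (f : ℝ → ℝ) (γ : ℝ → ℝ × ℝ) : Prop :=
  IsIntegralCurve γ fun _ => reversedField f

namespace IsReversedOrbit

variable {f : ℝ → ℝ} {K : ℝ≥0} {γ : ℝ → ℝ × ℝ}

theorem hasDerivAt_fst (hγ : IsReversedOrbit f γ) (t : ℝ) :
    HasDerivAt (fun t => (γ t).1) (-unitClamp (γ t).2) t :=
  (hγ t).fst

theorem hasDerivAt_snd (hγ : IsReversedOrbit f γ) (t : ℝ) :
    HasDerivAt (fun t => (γ t).2) (f (unitClamp (γ t).1) - 2 * unitClamp (γ t).2) t :=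
  (hγ t).snd

theorem antitone_fst (hγ : IsReversedOrbit f γ) : Antitone fun t => (γ t).1 :=
  antitone_of_hasDerivAt_nonpos hγ.hasDerivAt_fst fun t => neg_nonpos.2 (unitClamp_mem (γ t).2).1

theorem hasDerivAt_two_mul_fst_sub_snd (hγ : IsReversedOrbit f γ) (t : ℝ) :
    HasDerivAt (fun t => 2 * (γ t).1 - (γ t).2) (-f (unitClamp (γ t).1)) t :=
  (((hγ.hasDerivAt_fst t).const_mul 2).sub (hγ.hasDerivAt_snd t)).congr_deriv (by ring)

theorem mem_trappingTriangle_of_le (hf : IsNormalizedMonostable K f) (hγ : IsReversedOrbit f γ)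
    {a b : ℝ} (hab : a ≤ b) (ha : γ a ∈ trappingTriangle) : γ b ∈ trappingTriangle := by
  refine ⟨?_, ?_, (hγ.antitone_fst hab).trans ha.2.2⟩
  · refine nonneg_of_deriv_nonneg_of_neg hγ.hasDerivAt_snd (fun t ht => ?_) hab ha.1
    rw [unitClamp_of_nonpos ht.le, mul_zero, sub_zero]
    exact (hf.apply_mem_Icc (unitClamp_mem _)).1
  · refine sub_nonneg.1 (nonneg_of_deriv_nonneg_of_neg
      (fun t => (hγ.hasDerivAt_fst t).sub (hγ.hasDerivAt_snd t)) (fun t ht => ?_) hab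
      (sub_nonneg.2 ha.2.1))
    have huv : unitClamp (γ t).1 ≤ unitClamp (γ t).2 := monotone_unitClamp (sub_neg.1 ht).le
    have hfu : f (unitClamp (γ t).1) ≤ unitClamp (γ t).1 :=
      (hf.apply_mem_Icc (unitClamp_mem _)).2
    linarith

/-- `2u - v` loses at least `(b - a) min_{[p, q]} f` while `u` stays in `[p, q]`. -/
theorem exists_transit_time_le (hf : IsNormalizedMonostable K f) (hγ : IsReversedOrbit f γ)
    {p q : ℝ} (hp : 0 < p) (hq : q < 1) :
    ∃ T, ∀ a b, a ≤ b → γ a ∈ trappingTriangle → (γ a).1 ≤ q → p ≤ (γ b).1 → b - a ≤ T := by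
  have hpq : Icc p q ⊆ Ioo 0 1 := fun u hu => ⟨hp.trans_le hu.1, hu.2.trans_lt hq⟩
  obtain ⟨m, hm, hmf⟩ := isCompact_Icc.exists_forall_le'
    (hf.lipschitz.continuousOn.mono (hpq.trans Ioo_subset_Icc_self)) fun u hu => hf.pos u (hpq hu)
  refine ⟨2 / m, fun a b hab ha haq hpb => (le_div_iff₀ hm).2 ?_⟩
  have hb : γ b ∈ trappingTriangle := hγ.mem_trappingTriangle_of_le hf hab ha
  have hloss := (convex_Icc a b).image_sub_le_mul_sub_of_deriv_le (C := -m)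
    (HasDerivAt.continuousOn fun t _ => hγ.hasDerivAt_two_mul_fst_sub_snd t)
    (fun t _ => (hγ.hasDerivAt_two_mul_fst_sub_snd t).differentiableAt.differentiableWithinAt)
    (fun t ht => by
      rw [interior_Icc] at ht
      have hu : (γ t).1 ∈ Icc p q :=
        ⟨hpb.trans (hγ.antitone_fst ht.2.le), (hγ.antitone_fst ht.1.le).trans haq⟩
      rw [(hγ.hasDerivAt_two_mul_fst_sub_snd t).deriv,
        unitClamp_of_mem (Ioo_subset_Icc_self (hpq hu))]
      exact neg_le_neg (hmf _ hu))
    a ⟨le_rfl, hab⟩ b ⟨hab, le_rfl⟩ hab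
  linarith [ha.1, ha.2.2, hb.1, hb.2.1]

theorem exists_fst_eq (hf : IsNormalizedMonostable K f) (hγ : IsReversedOrbit f γ) {a r : ℝ}
    (ha : γ a ∈ trappingTriangle) (ha₁ : (γ a).1 < 1) (hr : 0 < r) (hra : r ≤ (γ a).1) :
    ∃ b ≥ a, (γ b).1 = r := by
  obtain ⟨T, hT⟩ := hγ.exists_transit_time_le hf hr ha₁
  have hT₀ : 0 ≤ T := by simpa using hT a a le_rfl ha le_rfl hra
  have hbelow : (γ (a + T + 1)).1 ≤ r := by
    by_contra! h
    linarith [hT a (a + T + 1) (by linarith) ha le_rfl h.le]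
  obtain ⟨b, hb, hbr⟩ := intermediate_value_Icc' (show a ≤ a + T + 1 by linarith)
    hγ.continuous.fst.continuousOn ⟨hbelow, hra⟩
  exact ⟨b, hb.1, hbr⟩

theorem snd_pos (hf : IsNormalizedMonostable K f) (hγ : IsReversedOrbit f γ)
    (hmem : ∀ t, γ t ∈ trappingTriangle) {s : ℝ} (hs : (γ s).1 ∈ Ioo (0 : ℝ) 1) (t : ℝ) :
    0 < (γ t).2 := by
  refine (hmem t).1.lt_of_ne' fun hv => ?_
  have hmin : IsLocalMin (fun r => (γ r).2) t := .of_forall fun r => hv.trans_le (hmem r).1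
  have hfield : reversedField f (γ t) = 0 :=
    Prod.ext (by simp [reversedField, hv, unitClamp_of_nonpos])
      (hmin.hasDerivAt_eq_zero (hγ.hasDerivAt_snd t))
  have hrest : γ s = γ t := eq_of_isIntegralCurve_of_apply_eq_zero
    (lipschitzWith_reversedField hf.lipschitz) hγ hfield s
  have hfu : f (γ s).1 = 0 := by
    have := congrArg Prod.snd hfield
    rwa [reversedField_of_mem_trappingTriangle (hmem t), hv, mul_zero, sub_zero, ← hrest] at this
  exact (hf.pos _ hs).ne' hfu

theorem tendsto_fst_atTop (hf : IsNormalizedMonostable K f) (hγ : IsReversedOrbit f γ) {s : ℝ}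
    (hs : γ s ∈ trappingTriangle) (hs₁ : (γ s).1 < 1) :
    Tendsto (fun t => (γ t).1) atTop (𝓝 0) := by
  refine tendsto_order.2 ⟨fun r hr => ?_, fun r hr => ?_⟩
  · filter_upwards [eventually_ge_atTop s] with t ht
    exact hr.trans_le (fst_mem_of_mem_trappingTriangle (hγ.mem_trappingTriangle_of_le hf ht hs)).1
  · obtain ⟨T, hT⟩ := hγ.exists_transit_time_le hf hr hs₁
    filter_upwards [eventually_gt_atTop (s + T), eventually_ge_atTop s] with t htT ht
    by_contra! h
    linarith [hT s t ht hs le_rfl h]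

theorem tendsto_fst_atBot (hf : IsNormalizedMonostable K f) (hγ : IsReversedOrbit f γ)
    (hmem : ∀ t, γ t ∈ trappingTriangle) {s : ℝ} (hs₀ : 0 < (γ s).1) :
    Tendsto (fun t => (γ t).1) atBot (𝓝 1) := by
  refine tendsto_order.2 ⟨fun r hr => ?_, fun r hr => .of_forall fun t =>
    (hmem t).2.2.trans_lt hr⟩
  obtain ⟨T, hT⟩ := hγ.exists_transit_time_le hf hs₀ hr
  filter_upwards [eventually_lt_atBot (s - T), eventually_le_atBot s] with t htT ht
  by_contra! h
  linarith [hT t s ht (hmem t) h le_rfl]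

end IsReversedOrbit

/-- Orbits issued from `(1 - ε, 0)` linger near the equilibrium `(1, 0)` for a time of order
`log (1 / ε)`. -/
theorem exists_isReversedOrbit_mem_trappingTriangle_of_neg_le {f : ℝ → ℝ} {K : ℝ≥0}
    (hf : IsNormalizedMonostable K f) {T : ℝ} (hT : 0 ≤ T) :
    ∃ γ : ℝ → ℝ × ℝ, IsReversedOrbit f γ ∧ (γ 0).1 = 1 / 2 ∧
      ∀ t, -T ≤ t → γ t ∈ trappingTriangle := by
  set ε : ℝ := 1 / 2 * Real.exp (-((K + 2 : ℝ≥0) * T))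
  have hε₀ : 0 < ε := by positivity
  have hε₁ : ε ≤ 1 / 2 := by
    have hexp : Real.exp (-((K + 2 : ℝ≥0) * T)) ≤ 1 :=
      Real.exp_le_one_iff.2 (neg_nonpos.2 (by positivity))
    exact mul_le_of_le_one_right one_half_pos.le hexp
  obtain ⟨γ, hγ₀, (hγ : IsReversedOrbit f γ)⟩ := exists_isIntegralCurve_of_bounded
    (lipschitzWith_reversedField hf.lipschitz) hf.norm_reversedField_le (1 - ε, 0)
  have hmem : γ 0 ∈ trappingTriangle := by
    rw [hγ₀]
    exact ⟨le_rfl, by linarith, by linarith⟩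
  obtain ⟨τ, hτ₀, hτ⟩ := hγ.exists_fst_eq hf (r := 1 / 2) hmem (by rw [hγ₀]; linarith)
    (by norm_num) (by rw [hγ₀]; linarith)
  have hdist₀ : dist (γ 0) (1, 0) = ε := by
    simp [hγ₀, Prod.dist_eq, abs_of_pos hε₀, hε₀.le]
  have hdistτ : 1 / 2 ≤ dist (γ τ) (1, 0) := by
    refine le_trans ?_ (le_max_left _ _)
    rw [hτ, Real.dist_eq]
    norm_num
  have hTτ : T ≤ τ := le_escape_time (lipschitzWith_reversedField hf.lipschitz) (by positivity) hγ
    (reversedField_one_zero hf.map_one) one_half_pos hτ₀ hdist₀.le hdistτ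
  exact ⟨fun t => γ (t + τ), hγ.comp_add τ, by simpa using hτ,
    fun t ht => hγ.mem_trappingTriangle_of_le hf (by linarith) hmem⟩

theorem exists_isReversedOrbit_forall_mem_trappingTriangle {f : ℝ → ℝ} {K : ℝ≥0}
    (hf : IsNormalizedMonostable K f) :
    ∃ γ : ℝ → ℝ × ℝ, IsReversedOrbit f γ ∧ (γ 0).1 = 1 / 2 ∧
      ∀ t, γ t ∈ trappingTriangle := by
  have hcompact : IsCompact (trappingTriangle ∩ {p | p.1 = 1 / 2}) :=
    isCompact_trappingTriangle.inter_right (isClosed_eq continuous_fst continuous_const)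
  obtain ⟨γ, hγ, hγ₀, hmem⟩ := exists_isIntegralCurve_forall_mem
    (lipschitzWith_reversedField hf.lipschitz) hf.norm_reversedField_le hcompact
    isClosed_trappingTriangle fun n => by
      obtain ⟨γ, hγ, hγ₀, hmem⟩ :=
        exists_isReversedOrbit_mem_trappingTriangle_of_neg_le hf n.cast_nonneg
      exact ⟨γ, hγ, ⟨hmem 0 (by simp), hγ₀⟩, hmem⟩
  exact ⟨γ, hγ, hγ₀.2, hmem⟩

/-- `U` is a strictly increasing `C²` traveling profile of speed `c` from `0` to `1`. -/
def IsIncreasingProfile (f : ℝ → ℝ) (c : ℝ) (U : ℝ → ℝ) : Prop :=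
  ContDiff ℝ 2 U ∧ (∀ x, U x ∈ Icc (0 : ℝ) 1) ∧ StrictMono U ∧
    (∀ x, deriv (deriv U) x + c * deriv U x + f (U x) = 0) ∧
    Tendsto U atBot (𝓝 0) ∧ Tendsto U atTop (𝓝 1)

theorem isIncreasingProfile_of_hasDerivAt {f U V : ℝ → ℝ} {c : ℝ} (hf : ContinuousOn f (Icc 0 1))
    (hU : ∀ x, HasDerivAt U (V x) x) (hV : ∀ x, HasDerivAt V (-c * V x - f (U x)) x)
    (hmem : ∀ x, U x ∈ Icc (0 : ℝ) 1) (hpos : ∀ x, 0 < V x) (hbot : Tendsto U atBot (𝓝 0))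
    (htop : Tendsto U atTop (𝓝 1)) : IsIncreasingProfile f c U := by
  have hU' : deriv U = V := funext fun x => (hU x).deriv
  have hV' : deriv V = fun x => -c * V x - f (U x) := funext fun x => (hV x).deriv
  have hVd : Differentiable ℝ V := fun x => (hV x).differentiableAt
  have hUd : Differentiable ℝ U := fun x => (hU x).differentiableAt
  have hsmooth : ContDiff ℝ 2 U := by
    rw [← one_add_one_eq_two, contDiff_succ_iff_deriv, hU', contDiff_one_iff_deriv, hV']
    exact ⟨hUd, by simp, hVd, (continuous_const.mul hVd.continuous).sub
      (hf.comp_continuous hUd.continuous hmem)⟩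
  refine ⟨hsmooth, hmem, strictMono_of_hasDerivAt_pos hU hpos, fun x => ?_, hbot, htop⟩
  rw [hU', hV']
  ring

theorem exists_isIncreasingProfile_neg_two {f : ℝ → ℝ} {K : ℝ≥0}
    (hf : IsNormalizedMonostable K f) : ∃ U, IsIncreasingProfile f (-2) U := by
  obtain ⟨γ, hγ, hγ₀, hmem⟩ := exists_isReversedOrbit_forall_mem_trappingTriangle hf
  have hγ₀' : (γ 0).1 ∈ Ioo (0 : ℝ) 1 := by rw [hγ₀]; norm_num
  have hderiv (x : ℝ) :
      HasDerivAt (fun x => γ (-x)) ((γ (-x)).2, - -2 * (γ (-x)).2 - f (γ (-x)).1) x := by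
    refine (isIntegralCurve_comp_neg hγ x).congr_deriv ?_
    dsimp only
    rw [reversedField_of_mem_trappingTriangle (hmem (-x))]
    ext <;> simp
  exact ⟨fun x => (γ (-x)).1, isIncreasingProfile_of_hasDerivAt hf.lipschitz.continuousOn
    (fun x => (hderiv x).fst) (fun x => (hderiv x).snd)
    (fun x => fst_mem_of_mem_trappingTriangle (hmem (-x))) (fun x => hγ.snd_pos hf hmem hγ₀' (-x))
    ((hγ.tendsto_fst_atTop hf (hmem 0) hγ₀'.2).comp tendsto_neg_atBot_atTop)
    ((hγ.tendsto_fst_atBot hf hmem hγ₀'.1).comp tendsto_neg_atTop_atBot)⟩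

theorem isIncreasingProfile_comp_mul {f U : ℝ → ℝ} {c k : ℝ} (hk : 0 < k)
    (hU : IsIncreasingProfile (fun u => f u / k ^ 2) c U) :
    IsIncreasingProfile f (k * c) (fun x => U (k * x)) := by
  obtain ⟨hsmooth, hmem, hmono, hode, hbot, htop⟩ := hU
  refine ⟨hsmooth.comp (contDiff_const.mul contDiff_id), fun x => hmem _,
    hmono.comp (strictMono_mul_left_of_pos hk), fun x => ?_,
    hbot.comp (tendsto_id.const_mul_atBot hk), htop.comp (tendsto_id.const_mul_atTop hk)⟩
  have hderiv : deriv (fun x => U (k * x)) = fun x => k * deriv U (k * x) :=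
    funext fun x => deriv_comp_mul_left k U x
  have hderiv2 : deriv (fun x => k * deriv U (k * x)) x = k * (k * deriv (deriv U) (k * x)) := by
    rw [deriv_const_mul_field, deriv_comp_mul_left k (deriv U) x, smul_eq_mul]
  rw [hderiv, hderiv2]
  have hode_x := hode (k * x)
  field_simp at hode_x
  linarith

theorem isNormalizedMonostable_div_sq {f : ℝ → ℝ} {K : ℝ≥0} {L k : ℝ}
    (hlip : LipschitzOnWith K f (Icc 0 1)) (hf0 : f 0 = 0) (hf1 : f 1 = 0)
    (hpos : ∀ u ∈ Ioo (0 : ℝ) 1, 0 < f u) (hle : ∀ u ∈ Ioo (0 : ℝ) 1, f u ≤ L * u) (hk : 0 < k)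
    (hLk : L ≤ k ^ 2) :
    IsNormalizedMonostable (‖(k ^ 2)⁻¹‖₊ * K) fun u => f u / k ^ 2 where
  lipschitz := by
    simpa only [Function.comp_def, smul_eq_mul, ← div_eq_inv_mul] using
      (lipschitzWith_smul (k ^ 2)⁻¹).comp_lipschitzOnWith hlip
  map_zero := by rw [hf0, zero_div]
  map_one := by rw [hf1, zero_div]
  pos u hu := div_pos (hpos u hu) (by positivity)
  le_self u hu := (div_le_iff₀' (by positivity)).2
    ((hle u hu).trans (mul_le_mul_of_nonneg_right hLk hu.1.le))

theorem pos_of_strictConcaveOn {f : ℝ → ℝ} (hf : StrictConcaveOn ℝ (Icc 0 1) f) (hf0 : f 0 = 0)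
    (hf1 : f 1 = 0) {u : ℝ} (hu : u ∈ Ioo (0 : ℝ) 1) : 0 < f u := by
  simpa [hf0, hf1] using hf.2 (left_mem_Icc.2 zero_le_one) (right_mem_Icc.2 zero_le_one)
    zero_ne_one (sub_pos.2 hu.2) hu.1 (sub_add_cancel 1 u)

theorem le_deriv_zero_mul_of_concaveOn {f : ℝ → ℝ} (hf : ConcaveOn ℝ (Icc 0 1) f)
    (hd : DifferentiableAt ℝ f 0) (hf0 : f 0 = 0) {u : ℝ} (hu : u ∈ Ioo (0 : ℝ) 1) :
    f u ≤ deriv f 0 * u := by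
  have hslope : slope f 0 u ≤ deriv f 0 :=
    hf.slope_le_deriv (left_mem_Icc.2 zero_le_one) (Ioo_subset_Icc_self hu) hu.1 hd
  rwa [slope_def_field, hf0, sub_zero, sub_zero, div_le_iff₀ hu.1] at hslope

theorem pos_of_forall_le_mul {f : ℝ → ℝ} {L : ℝ} (hpos : ∀ u ∈ Ioo (0 : ℝ) 1, 0 < f u)
    (hle : ∀ u ∈ Ioo (0 : ℝ) 1, f u ≤ L * u) : 0 < L := by
  have hhalf : (1 / 2 : ℝ) ∈ Ioo (0 : ℝ) 1 := by norm_num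
  linarith [hpos _ hhalf, hle _ hhalf]

end TravelingProfile

open TravelingProfile

theorem monostable_traveling_profiles_exist_general {f : ℝ → ℝ} {K : ℝ≥0} {L : ℝ}
    (hlip : LipschitzOnWith K f (Icc 0 1)) (hf0 : f 0 = 0) (hf1 : f 1 = 0)
    (hpos : ∀ u ∈ Ioo (0 : ℝ) 1, 0 < f u) (hle : ∀ u ∈ Ioo (0 : ℝ) 1, f u ≤ L * u) :
    -2 * √L < 0 ∧ ∀ c ≤ -2 * √L, ∃ U, IsIncreasingProfile f c U := by
  have hL : 0 < √L := Real.sqrt_pos.2 (pos_of_forall_le_mul hpos hle)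
  refine ⟨by linarith, fun c hc => ?_⟩
  have hk : 0 < -c / 2 := by linarith
  have hLk : L ≤ (-c / 2) ^ 2 := (Real.sqrt_le_left hk.le).1 (by linarith)
  obtain ⟨U, hU⟩ := exists_isIncreasingProfile_neg_two
    (isNormalizedMonostable_div_sq hlip hf0 hf1 hpos hle hk hLk)
  have hscaled := isIncreasingProfile_comp_mul hk hU
  rw [div_mul_eq_mul_div, neg_mul_neg, mul_div_cancel_right₀ c two_ne_zero] at hscaled
  exact ⟨_, hscaled⟩

/-- In the monostable case (A1), there is a threshold speed `c* < 0` such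
that for every `c ≤ c*` a monotone increasing traveling profile of speed `c` exists. -/
theorem monostable_traveling_profiles_exist
    (f : ℝ → ℝ) (hf : ContDiff ℝ 2 f)
    (hf0 : f 0 = 0) (hf1 : f 1 = 0)
    (hf'' : ∀ u ∈ Icc (0:ℝ) 1, deriv (deriv f) u < 0) :
    ∃ cstar : ℝ, cstar < 0 ∧
      ∀ c ≤ cstar, ∃ U : ℝ → ℝ,
        ContDiff ℝ 2 U ∧ (∀ x, U x ∈ Icc (0:ℝ) 1) ∧ StrictMono U ∧
        (∀ x, deriv (deriv U) x + c * deriv U x + f (U x) = 0) ∧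
        Tendsto U atBot (nhds 0) ∧ Tendsto U atTop (nhds 1) := by
  have hconc : StrictConcaveOn ℝ (Icc 0 1) f :=
    strictConcaveOn_of_deriv2_neg' (convex_Icc 0 1) hf.continuous.continuousOn hf''
  obtain ⟨K, hlip⟩ := (hf.of_le one_le_two).locallyLipschitz.locallyLipschitzOn
    |>.exists_lipschitzOnWith_of_compact (isCompact_Icc (a := (0 : ℝ)) (b := 1))
  exact ⟨_, monostable_traveling_profiles_exist_general hlip hf0 hf1
    (fun _ => pos_of_strictConcaveOn hconc hf0 hf1)
    (fun _ => le_deriv_zero_mul_of_concaveOn hconc.concaveOn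
      (hf.differentiable two_ne_zero 0) hf0)⟩
end

section
/- Let f ∈ C²([0,1]) with f(0) = f(1) = 0, and let U : ℝ → (0,1) be a C², strictly increasing solution of U''(x) + c·U'(x) + f(U(x)) = 0 for all x ∈ ℝ, with U(x) → 0 and U'(x) → 0 as x → −∞, U(x) → 1 and U'(x) → 0 as x → +∞, and with (U')² integrable on ℝ. Then c · ∫_ℝ (U'(x))² dx = − ∫_0^1 f(u) du. In particular, the sign of the wave speed c is the opposite of the sign of ∫_0^1 f(u) du. -/
open Set Filter MeasureTheory

/-!
The argument is the classical energy computation, and it works for any gradient nonlinearity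
`f = ∇F` on a Hilbert space. Taking the inner product of the profile equation with `U'` shows that
the energy `‖U'‖² / 2 + F(U)` of the underlying mechanical system has derivative `-c ‖U'‖²`: the
speed acts as a friction coefficient. As `U'` vanishes at `±∞`, integrating over `ℝ` identifies
`c ∫ ‖U'‖²` with the drop of `F` between the two limits of `U`. When these limits differ, `U` is
not constant, so `∫ ‖U'‖²` is positive and the sign of `c` can be read off.
-/

open scoped Topology RealInnerProductSpace

theorem real_sign_mul_of_pos (r : ℝ) {s : ℝ} (hs : 0 < s) : Real.sign (r * s) = Real.sign r := by
  rcases lt_trichotomy r 0 with hr | rfl | hr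
  · rw [Real.sign_of_neg hr, Real.sign_of_neg (mul_neg_of_neg_of_pos hr hs)]
  · rw [zero_mul]
  · rw [Real.sign_of_pos hr, Real.sign_of_pos (mul_pos hr hs)]

section NormedSpace

variable {E : Type*} [NormedAddCommGroup E] [NormedSpace ℝ E] {U : ℝ → E} {a b : E}

theorem exists_deriv_ne_zero_of_tendsto (hU : Differentiable ℝ U) (hab : a ≠ b)
    (hbot : Tendsto U atBot (𝓝 a)) (htop : Tendsto U atTop (𝓝 b)) : ∃ x, deriv U x ≠ 0 := by
  by_contra! hderiv
  have hconst : U = fun _ ↦ U 0 := funext fun x ↦ is_const_of_deriv_eq_zero hU hderiv x 0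
  rw [hconst, tendsto_const_nhds_iff] at hbot htop
  exact hab (hbot.symm.trans htop)

theorem integral_norm_deriv_sq_pos_of_tendsto (hU : Differentiable ℝ U)
    (hU' : Continuous (deriv U)) (hab : a ≠ b) (hbot : Tendsto U atBot (𝓝 a))
    (htop : Tendsto U atTop (𝓝 b)) (hint : Integrable fun x ↦ ‖deriv U x‖ ^ 2) :
    0 < ∫ x, ‖deriv U x‖ ^ 2 := by
  obtain ⟨x, hx⟩ := exists_deriv_ne_zero_of_tendsto hU hab hbot htop
  exact integral_pos_of_integrable_nonneg_nonzero (hU'.norm.pow 2) hint (fun _ ↦ sq_nonneg _)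
    (pow_ne_zero 2 (norm_ne_zero_iff.mpr hx))

/-- `U` is a traveling profile of speed `c` for `u_t = f(u) + u_xx`, connecting the state `a` at
`-∞` to the state `b` at `+∞`, with derivative vanishing at both ends. The differentiability fields
ensure that the `deriv`s in the equation are genuine derivatives. -/
structure IsTravelingProfile (c : ℝ) (f : E → E) (a b : E) (U : ℝ → E) : Prop where
  differentiable : Differentiable ℝ U
  differentiable_deriv : Differentiable ℝ (deriv U)
  ode : ∀ x, deriv (deriv U) x + c • deriv U x + f (U x) = 0
  tendsto_atBot : Tendsto U atBot (𝓝 a)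
  tendsto_deriv_atBot : Tendsto (deriv U) atBot (𝓝 0)
  tendsto_atTop : Tendsto U atTop (𝓝 b)
  tendsto_deriv_atTop : Tendsto (deriv U) atTop (𝓝 0)

/-- The mechanical energy at time `x` of a unit mass moving along `U`, with `F` as potential
energy. -/
noncomputable def energy (F : E → ℝ) (U : ℝ → E) (x : ℝ) : ℝ :=
  ‖deriv U x‖ ^ 2 / 2 + F (U x)

theorem tendsto_energy {F : E → ℝ} {l : Filter ℝ} (hF : ContinuousAt F a)
    (hU : Tendsto U l (𝓝 a)) (hU' : Tendsto (deriv U) l (𝓝 0)) :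
    Tendsto (energy F U) l (𝓝 (F a)) := by
  have hkinetic : Tendsto (fun x ↦ ‖deriv U x‖ ^ 2 / 2) l (𝓝 0) := by
    simpa using (hU'.norm.pow 2).div_const 2
  rw [← zero_add (F a)]
  exact hkinetic.add (hF.tendsto.comp hU)

end NormedSpace

section GradientSystem

variable {E : Type*} [NormedAddCommGroup E] [InnerProductSpace ℝ E] [CompleteSpace E]
  {F : E → ℝ} {U : ℝ → E} {c : ℝ}

theorem hasDerivAt_energy {v : E} {x : ℝ} (hF : HasGradientAt F v (U x))
    (hU : DifferentiableAt ℝ U x) (hU' : DifferentiableAt ℝ (deriv U) x)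
    (hode : deriv (deriv U) x + c • deriv U x + v = 0) :
    HasDerivAt (energy F U) (-(c * ‖deriv U x‖ ^ 2)) x := by
  have hkinetic : HasDerivAt (fun y ↦ ‖deriv U y‖ ^ 2 / 2) ⟪deriv U x, deriv (deriv U) x⟫ x := by
    simpa using hU'.hasDerivAt.norm_sq.div_const 2
  have hpotential : HasDerivAt (fun y ↦ F (U y)) ⟪v, deriv U x⟫ x :=
    hF.hasFDerivAt.comp_hasDerivAt x hU.hasDerivAt
  refine (hkinetic.add hpotential).congr_deriv ?_
  calc ⟪deriv U x, deriv (deriv U) x⟫ + ⟪v, deriv U x⟫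
      = ⟪deriv U x, deriv (deriv U) x + v⟫ := by rw [inner_add_right, real_inner_comm v]
    _ = ⟪deriv U x, -(c • deriv U x)⟫ := by
      rw [eq_neg_of_add_eq_zero_left ((add_right_comm _ _ _).trans hode)]
    _ = -(c * ‖deriv U x‖ ^ 2) := by
      rw [inner_neg_right, real_inner_smul_right, real_inner_self_eq_norm_sq]

variable {f : E → E} {a b : E}

theorem IsTravelingProfile.speed_mul_integral_norm_deriv_sq (hU : IsTravelingProfile c f a b U)
    (hF : ∀ u, HasGradientAt F (f u) u) (hint : Integrable fun x ↦ ‖deriv U x‖ ^ 2) :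
    c * ∫ x, ‖deriv U x‖ ^ 2 = -(F b - F a) := by
  have henergy : ∫ x, -(c * ‖deriv U x‖ ^ 2) = F b - F a :=
    integral_of_hasDerivAt_of_tendsto
      (fun x ↦ hasDerivAt_energy (hF _) (hU.differentiable x) (hU.differentiable_deriv x)
        (hU.ode x))
      (hint.const_mul c).neg
      (tendsto_energy (hF a).continuousAt hU.tendsto_atBot hU.tendsto_deriv_atBot)
      (tendsto_energy (hF b).continuousAt hU.tendsto_atTop hU.tendsto_deriv_atTop)
  rw [← henergy, integral_neg, neg_neg, integral_const_mul]

theorem wave_speed_sign_general (hU : IsTravelingProfile c f a b U) (hab : a ≠ b)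
    (hF : ∀ u, HasGradientAt F (f u) u) (hint : Integrable fun x ↦ ‖deriv U x‖ ^ 2) :
    c * ∫ x, ‖deriv U x‖ ^ 2 = -(F b - F a) ∧ Real.sign c = -Real.sign (F b - F a) := by
  have hspeed := hU.speed_mul_integral_norm_deriv_sq hF hint
  have hpos : 0 < ∫ x, ‖deriv U x‖ ^ 2 :=
    integral_norm_deriv_sq_pos_of_tendsto hU.differentiable hU.differentiable_deriv.continuous hab
      hU.tendsto_atBot hU.tendsto_atTop hint
  refine ⟨hspeed, ?_⟩
  rw [← Real.sign_neg, ← hspeed, real_sign_mul_of_pos c hpos]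

end GradientSystem

/-- For a strictly increasing traveling profile `U` of speed `c`,
`c ∫_ℝ (U')² dx = -∫_0^1 f(u) du`; in particular `sign c = - sign ∫_0^1 f`. -/
theorem wave_speed_sign
    (f : ℝ → ℝ) (hf : ContDiff ℝ 2 f) (hf0 : f 0 = 0) (hf1 : f 1 = 0)
    (c : ℝ) (U : ℝ → ℝ) (hU : ContDiff ℝ 2 U)
    (hrange : ∀ x, U x ∈ Ioo (0:ℝ) 1) (hmono : StrictMono U)
    (hode : ∀ x, deriv (deriv U) x + c * deriv U x + f (U x) = 0)
    (hUbot : Tendsto U atBot (nhds 0))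
    (hU'bot : Tendsto (deriv U) atBot (nhds 0))
    (hUtop : Tendsto U atTop (nhds 1))
    (hU'top : Tendsto (deriv U) atTop (nhds 0))
    (hint : Integrable (fun x => (deriv U x) ^ 2)) :
    c * ∫ x, (deriv U x) ^ 2 = -∫ u in (0:ℝ)..1, f u ∧
    Real.sign c = -Real.sign (∫ u in (0:ℝ)..1, f u) := by
  have hprofile : IsTravelingProfile c f 0 1 U :=
    ⟨hU.differentiable two_ne_zero, hU.differentiable_deriv_two, hode, hUbot, hU'bot, hUtop,
      hU'top⟩
  have hprimitive (u : ℝ) : HasGradientAt (fun y ↦ ∫ t in (0 : ℝ)..y, f t) (f u) u :=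
    (hf.continuous.integral_hasStrictDerivAt 0 u).hasDerivAt.hasGradientAt'
  simpa using wave_speed_sign_general hprofile zero_ne_one hprimitive (by simpa using hint)
end

section
/- Let f be bistable (assumption (A2)) with interior zero u*, and assume additionally (A4): (4 − 2√3)·f'(u) + 2u·f''(u) ≤ 0 for all u ∈ [u*, 1]. Then for every u ∈ (u*, 1) one has −3·f(u)² − u²·f'(u)² + 4u·f(u)·f'(u) + 2u²·f(u)·f''(u) ≤ 0; equivalently, the function g(u) = (3f(u) + u·f'(u)) / (2·√(u·f(u))) is monotone nonincreasing on (u*, 1). -/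
open Set Filter

/-!
For a constant `k ≥ 0`, the derivative of `(k f + u f') / (2 √(u f))` is
`(-k f² - u² f'² + (k + 1) u f f' + 2 u² f f'') / (4 √(u f) ^ 3)`. Completing the square, its
numerator equals `u f ((k + 1 - 2 √k) f' + 2 u f'') - (√k f - u f')²`, which is nonpositive as soon
as the bracket is; for `k = 3` the bracket is the left-hand side of (A4). Finally `f > 0` on
`(u*, 1)`, since `f` leaves its zero `u*` with positive slope and does not vanish again before `1`.
-/

theorem pos_on_of_continuousOn_of_ne_zero {X α : Type*} [TopologicalSpace X] [TopologicalSpace α]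
    [LinearOrder α] [OrderClosedTopology α] [Zero α] {s : Set X} (hs : IsPreconnected s)
    {f : X → α} (hf : ContinuousOn f s) (hne : ∀ x ∈ s, f x ≠ 0) {a : X} (ha : a ∈ s)
    (hfa : 0 < f a) : ∀ x ∈ s, 0 < f x := by
  intro x hx
  by_contra! hfx
  obtain ⟨z, hz, hfz⟩ := hs.intermediate_value hx ha hf ⟨hfx, hfa.le⟩
  exact hne z hz hfz

theorem pos_on_Ioo_of_deriv_pos_of_ne_zero {f : ℝ → ℝ} {a b : ℝ} (hf : ContinuousOn f (Ioo a b))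
    (hfa : f a = 0) (hf'a : 0 < deriv f a) (hne : ∀ x ∈ Ioo a b, f x ≠ 0) :
    ∀ x ∈ Ioo a b, 0 < f x := by
  intro x hx
  have sign_near_a := (eventually_nhdsWithin_sign_eq_of_deriv_pos hf'a hfa).filter_mono
    (nhdsWithin_le_nhds (s := Ioi a))
  obtain ⟨v, hsign, hv⟩ := (sign_near_a.and (Ioo_mem_nhdsGT (hx.1.trans hx.2))).exists
  have hfv : 0 < f v := by
    rwa [sign_pos (sub_pos.2 hv.1), sign_eq_one_iff] at hsign
  exact pos_on_of_continuousOn_of_ne_zero isPreconnected_Ioo hf hne hv hfv x hx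

theorem quadratic_nonpos_of_linear_nonpos {k u y y' y'' : ℝ} (hk : 0 ≤ k) (huy : 0 ≤ u * y)
    (h : (k + 1 - 2 * √k) * y' + 2 * u * y'' ≤ 0) :
    -k * y ^ 2 - u ^ 2 * y' ^ 2 + (k + 1) * u * y * y' + 2 * u ^ 2 * y * y'' ≤ 0 := by
  calc -k * y ^ 2 - u ^ 2 * y' ^ 2 + (k + 1) * u * y * y' + 2 * u ^ 2 * y * y''
    _ = u * y * ((k + 1 - 2 * √k) * y' + 2 * u * y'') - (√k * y - u * y') ^ 2 := by
      linear_combination y ^ 2 * Real.sq_sqrt hk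
    _ ≤ u * y * ((k + 1 - 2 * √k) * y' + 2 * u * y'') := sub_le_self _ (sq_nonneg _)
    _ ≤ 0 := mul_nonpos_of_nonneg_of_nonpos huy h

theorem hasDerivAt_add_mul_div_sqrt_mul (k : ℝ) {f f' : ℝ → ℝ} {f'' u : ℝ}
    (hf : HasDerivAt f (f' u) u) (hf' : HasDerivAt f' f'' u) (hpos : 0 < u * f u) :
    HasDerivAt (fun x => (k * f x + x * f' x) / (2 * √(x * f x)))
      ((-k * f u ^ 2 - u ^ 2 * f' u ^ 2 + (k + 1) * u * f u * f' u + 2 * u ^ 2 * f u * f'') /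
        (4 * √(u * f u) ^ 3)) u := by
  have sqrt_pos : 0 < √(u * f u) := Real.sqrt_pos.2 hpos
  have hnum : HasDerivAt (fun x => k * f x + x * f' x) (k * f' u + (1 * f' u + u * f'')) u :=
    (hf.const_mul k).add ((hasDerivAt_id' u).mul hf')
  have hden : HasDerivAt (fun x => 2 * √(x * f x))
      (2 * ((1 * f u + u * f' u) / (2 * √(u * f u)))) u :=
    (((hasDerivAt_id' u).mul hf).sqrt hpos.ne').const_mul 2
  refine (hnum.div hden (by positivity)).congr_deriv ?_
  have sq_sqrt : √(u * f u) ^ 2 = u * f u := Real.sq_sqrt hpos.le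
  generalize √(u * f u) = r at sqrt_pos sq_sqrt
  field_simp
  rw [sq_sqrt]
  ring

theorem key_inequality_A4_general {k : ℝ} (hk : 0 ≤ k) {f : ℝ → ℝ} {s : Set ℝ}
    (hs : Convex ℝ s) (hf : ∀ u ∈ s, DifferentiableAt ℝ f u)
    (hf' : ∀ u ∈ s, DifferentiableAt ℝ (deriv f) u) (hpos : ∀ u ∈ s, 0 < u * f u)
    (hA4 : ∀ u ∈ s, (k + 1 - 2 * √k) * deriv f u + 2 * u * deriv (deriv f) u ≤ 0) :
    (∀ u ∈ s, -k * f u ^ 2 - u ^ 2 * deriv f u ^ 2 + (k + 1) * u * f u * deriv f u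
      + 2 * u ^ 2 * f u * deriv (deriv f) u ≤ 0) ∧
    AntitoneOn (fun u => (k * f u + u * deriv f u) / (2 * √(u * f u))) s := by
  have key := fun u (hu : u ∈ s) =>
    quadratic_nonpos_of_linear_nonpos hk (hpos u hu).le (hA4 u hu)
  have hasDeriv := fun u (hu : u ∈ s) => hasDerivAt_add_mul_div_sqrt_mul k
    (hf u hu).hasDerivAt (hf' u hu).hasDerivAt (hpos u hu)
  refine ⟨key, antitoneOn_of_hasDerivWithinAt_nonpos hs
    (fun u hu => (hasDeriv u hu).continuousAt.continuousWithinAt)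
    (fun u hu => (hasDeriv u (interior_subset hu)).hasDerivWithinAt) fun u hu => ?_⟩
  exact div_nonpos_of_nonpos_of_nonneg (key u (interior_subset hu)) (by positivity)

/-- under (A2) and (A4), the key inequality
`-3f² - u²(f')² + 4u f f' + 2u² f f'' ≤ 0` holds on `(u*,1)`; equivalently the
function `g(u) = (3f(u) + u f'(u)) / (2√(u f(u)))` is nonincreasing on `(u*,1)`. -/
theorem key_inequality_A4
    (f : ℝ → ℝ) (hf : ContDiff ℝ 2 f) (hf0 : f 0 = 0) (hf1 : f 1 = 0)
    (hf'0 : deriv f 0 < 0) (hf'1 : deriv f 1 < 0)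
    (ustar : ℝ) (hustar : ustar ∈ Ioo (0:ℝ) 1)
    (hfz : ∀ u ∈ Ioo (0:ℝ) 1, f u = 0 ↔ u = ustar)
    (hf'u : 0 < deriv f ustar)
    (hA4 : ∀ u ∈ Icc ustar (1:ℝ),
      (4 - 2 * Real.sqrt 3) * deriv f u + 2 * u * deriv (deriv f) u ≤ 0) :
    (∀ u ∈ Ioo ustar (1:ℝ),
      -3 * (f u) ^ 2 - u ^ 2 * (deriv f u) ^ 2 + 4 * u * f u * deriv f u
        + 2 * u ^ 2 * f u * deriv (deriv f) u ≤ 0) ∧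
    AntitoneOn (fun u => (3 * f u + u * deriv f u) / (2 * Real.sqrt (u * f u)))
      (Ioo ustar (1:ℝ)) := by
  have hf_pos : ∀ u ∈ Ioo ustar 1, 0 < f u :=
    pos_on_Ioo_of_deriv_pos_of_ne_zero hf.continuous.continuousOn ((hfz ustar hustar).2 rfl) hf'u
      fun u hu hfu => hu.1.ne' ((hfz u ⟨hustar.1.trans hu.1, hu.2⟩).1 hfu)
  have three_add_one : (3 : ℝ) + 1 = 4 := by norm_num
  simpa only [three_add_one] using key_inequality_A4_general zero_le_three (convex_Ioo ustar 1)
    (fun u _ => hf.differentiable two_ne_zero u) (fun u _ => hf.differentiable_deriv_two u)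
    (fun u hu => mul_pos (hustar.1.trans hu.1) (hf_pos u hu))
    (fun u hu => by simpa only [three_add_one] using hA4 u (Ioo_subset_Icc_self hu))
end
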